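/- arXiv:2512.21517 — 2 statements merged into one kernel-verified Lean document; each statement's English description precedes it below -/
import Mathlib

section
/- ∫_0^{π/2} t·log(cos t) dt = −(π²/8)·log 2 − (7/16)·ζ(3). -/
open Real

open Filter Topology

lemma aux_int (n : ℕ) : (∫ t in (0:ℝ)..(π/2), t * (Real.cos (2*n*t) / n)) = ((-1)^n - 1) / (4*(n:ℝ)^3) := by
  rcases Nat.eq_zero_or_pos n with rfl | hn
  · simp
  have hn' : (n:ℝ) ≠ 0 := by positivity
  have h : ∀ t ∈ Set.uIcc (0:ℝ) (π/2), HasDerivAt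
      (fun t : ℝ => t * Real.sin (2*n*t) / (2*n^2) + Real.cos (2*n*t) / (4*n^3))
      (t * (Real.cos (2*n*t) / n)) t := by
    intro t _
    have h0 : HasDerivAt (fun t : ℝ => 2*n*t) (2*n) t := by
      simpa using (hasDerivAt_id t).const_mul (2*(n:ℝ))
    have h1 := (((hasDerivAt_id t).mul h0.sin).div_const (2*(n:ℝ)^2)).add (h0.cos.div_const (4*(n:ℝ)^3))
    convert! h1 using 1
    simp only [id]
    field_simp
    ring
  rw [intervalIntegral.integral_eq_sub_of_hasDerivAt h (Continuous.intervalIntegrable (by fun_prop) _ _)]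
  have e : 2*(n:ℝ)*(π/2) = n*π := by ring
  rw [e, Real.sin_nat_mul_pi, Real.cos_nat_mul_pi]
  simp
  ring

lemma aux_series (r : ℝ) (h0 : 0 ≤ r) (h1 : r < 1) (t : ℝ) :
    HasSum (fun n : ℕ => (-r)^n * (Real.cos (2*n*t) / n))
      (-(Real.log ((1-r)^2 + 4*r*(Real.cos t)^2) / 2)) := by
  have hz : ‖-(r:ℂ) * Complex.exp ((2*t:ℝ) * Complex.I)‖ < 1 := by
    rw [norm_mul, Complex.norm_exp_ofReal_mul_I]; simp [abs_of_nonneg h0, h1]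
  have H := Complex.hasSum_re (Complex.hasSum_taylorSeries_neg_log hz)
  convert! H using 1
  · ext n
    rw [mul_pow, ← Complex.exp_nat_mul]
    have : (-(r:ℂ))^n * Complex.exp (n * ((2*t:ℝ) * Complex.I)) / n
        = (((-r)^n / n : ℝ) : ℂ) * Complex.exp ((2*n*t:ℝ) * Complex.I) := by
      push_cast; ring_nf
    rw [this, Complex.re_ofReal_mul, Complex.exp_ofReal_mul_I_re]
    ring
  · rw [Complex.neg_re, Complex.log_re]
    have : (1-r)^2 + 4*r*(Real.cos t)^2 = ‖1 - -(r:ℂ) * Complex.exp ((2*t:ℝ) * Complex.I)‖^2 := by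
      rw [← Complex.normSq_eq_norm_sq, Complex.normSq_apply]
      have e1 : (1 - -(r:ℂ) * Complex.exp ((2*t:ℝ) * Complex.I)).re = 1 + r * Real.cos (2*t) := by
        rw [← Complex.ofReal_neg, Complex.sub_re, Complex.re_ofReal_mul, Complex.exp_ofReal_mul_I_re]; simp
      have e2 : (1 - -(r:ℂ) * Complex.exp ((2*t:ℝ) * Complex.I)).im = r * Real.sin (2*t) := by
        rw [← Complex.ofReal_neg, Complex.sub_im, Complex.im_ofReal_mul, Complex.exp_ofReal_mul_I_im]; simp
      rw [e1, e2]
      have := Real.sin_sq_add_cos_sq (2*t)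
      have h2 := Real.cos_two_mul t
      linear_combination (-r^2) * this - 2*r*h2
    rw [this, Real.log_pow]
    push_cast; ring

lemma aux_hasSum (r : ℝ) (h0 : 0 ≤ r) (h1 : r < 1) :
    HasSum (fun n : ℕ => (-r)^n * (((-1)^n - 1) / (4*(n:ℝ)^3)))
      (∫ t in (0:ℝ)..(π/2), t * (-(Real.log ((1-r)^2 + 4*r*(Real.cos t)^2) / 2))) := by
  have := intervalIntegral.hasSum_integral_of_dominated_convergence (a := 0) (b := π/2)
    (μ := MeasureTheory.volume)
    (F := fun (n : ℕ) t => t * ((-r)^n * (Real.cos (2*n*t) / n)))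
    (f := fun t => t * (-(Real.log ((1-r)^2 + 4*r*(Real.cos t)^2) / 2)))
    (fun n _ => (π/2) * r^n) (fun n => (by fun_prop : Continuous _).aestronglyMeasurable)
    (fun n => Filter.Eventually.of_forall fun t ht => ?_)
    (Filter.Eventually.of_forall fun t ht => (summable_geometric_of_lt_one h0 h1).mul_left _)
    (by simp) (Filter.Eventually.of_forall fun t ht => (aux_series r h0 h1 t).mul_left t)
  · convert! this using 2 with n
    rw [← aux_int, ← intervalIntegral.integral_const_mul]
    congr 1; ext t; ring
  · rw [Set.uIoc_of_le (by positivity)] at ht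
    rw [norm_mul, norm_mul, norm_pow, norm_neg, Real.norm_of_nonneg h0, Real.norm_of_nonneg ht.1.le]
    have : ‖Real.cos (2*n*t) / n‖ ≤ 1 := by
      rw [norm_div, Real.norm_natCast]
      rcases Nat.eq_zero_or_pos n with rfl | hn
      · simp
      apply div_le_one_of_le₀ _ (by positivity)
      exact (Real.abs_cos_le_one _).trans (by exact_mod_cast hn)
    calc t * (r^n * _) ≤ (π/2) * (r^n * 1) := by
          have := ht.2
          have := ht.1.le
          gcongr
      _ = _ := by ring

lemma aux_even (n : ℕ) : (-1:ℝ)^(2*n) * (((-1)^(2*n) - 1) / (4*((2*n : ℕ):ℝ)^3)) = 0 := by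
  simp

lemma aux_odd (n : ℕ) : (-1:ℝ)^(2*n+1) * (((-1)^(2*n+1) - 1) / (4*((2*n+1 : ℕ):ℝ)^3))
    = (1/2) * (1 / ((2*n+1 : ℕ):ℝ)^3) := by
  have h : (-1:ℝ)^(2*n+1) = -1 := by rw [pow_succ, pow_mul]; norm_num
  have h' : ((2*n+1 : ℕ):ℝ) ≠ 0 := by positivity
  rw [h]
  generalize ((2*n+1 : ℕ):ℝ) = x at *
  field_simp
  norm_num

lemma aux_summable (c : ℕ) :
    Summable (fun n : ℕ => 1 / ((2*n+c : ℕ):ℝ)^3) := by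
  have hs : Summable (fun n : ℕ => 1 / (n:ℝ)^3) := Real.summable_one_div_nat_pow.2 (by norm_num)
  have hinj : Function.Injective (fun n : ℕ => 2*n+c) := by
    intro a b h
    simp only at h
    omega
  exact hs.comp_injective hinj

lemma aux_split (f : ℕ → ℝ) (g : ℕ → ℝ) (hg : Summable (fun n => g (2*n+1)))
    (hg0 : Summable (fun n => g (2*n)))
    (fe : ∀ n, f (2*n) = 0) (fo : ∀ n, f (2*n+1) = (1/2) * g (2*n+1))
    (h8 : ∀ n, g (2*n) = (1/8) * g n) : ∑' n, f n = (7/16) * ∑' n, g n := by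
  have h1 := tsum_even_add_odd hg0 hg
  have h3 := tsum_even_add_odd (f := f) (by simp only [fe]; exact summable_zero)
    (by simp only [fo]; exact hg.mul_left _)
  simp only [fe, fo, tsum_zero, tsum_mul_left] at h3
  simp only [h8, tsum_mul_left] at h1
  linarith

lemma aux_zeta : ∑' n : ℕ, (-1:ℝ)^n * (((-1)^n - 1) / (4*(n:ℝ)^3)) =
    (7/16) * ∑' k : ℕ, 1 / ((k:ℝ)+1)^3 := by
  have hs : Summable (fun n : ℕ => 1 / (n:ℝ)^3) := Real.summable_one_div_nat_pow.2 (by norm_num)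
  have hS : ∑' k : ℕ, 1 / ((k:ℝ)+1)^3 = ∑' n : ℕ, 1 / (n:ℝ)^3 := by
    rw [hs.tsum_eq_zero_add]; simp
  rw [hS]
  refine aux_split _ (fun n : ℕ => 1 / (n:ℝ)^3) (aux_summable 1) (aux_summable 0) aux_even aux_odd ?_
  intro n
  push_cast
  rw [mul_pow, ← one_div_mul_one_div]
  norm_num

theorem stmt12 :
    (∫ t in (0:ℝ)..(π/2), t * Real.log (Real.cos t)) =
      -(π^2/8) * Real.log 2 - (7/16) * ∑' k : ℕ, 1 / ((k:ℝ)+1)^3 := by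
  have hev : ∀ᶠ r : ℝ in 𝓝[<] 1, 1/4 < r ∧ r < 1 :=
    Ioo_mem_nhdsLT (by norm_num)
  have hlc : IntervalIntegrable (fun t => Real.log (Real.cos t)) MeasureTheory.volume 0 (π/2) :=
    intervalIntegrable_log_cos
  have L1 : Tendsto (fun r : ℝ => ∫ t in (0:ℝ)..(π/2), t * (-(Real.log ((1-r)^2 + 4*r*(Real.cos t)^2) / 2)))
      (𝓝[<] 1) (𝓝 (∫ t in (0:ℝ)..(π/2), t * (-(Real.log 2 + Real.log (Real.cos t))))) := by
    apply intervalIntegral.tendsto_integral_filter_of_dominated_convergence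
      (fun t => (π/2) * (|Real.log (Real.cos t)| + Real.log 4))
    · exact Eventually.of_forall fun r => (by fun_prop : Measurable _).aestronglyMeasurable
    · filter_upwards [hev] with r hr
      have : ∀ᵐ t : ℝ, t ≠ π/2 := by simp [MeasureTheory.ae_iff]
      filter_upwards [this] with t hne ht
      rw [Set.uIoc_of_le (by positivity)] at ht
      have hc : 0 < Real.cos t := Real.cos_pos_of_mem_Ioo ⟨by linarith [ht.1, Real.pi_pos], lt_of_le_of_ne ht.2 hne⟩
      have hc1 := Real.cos_le_one t
      have b1 : Real.cos t ^ 2 ≤ (1-r)^2 + 4*r*(Real.cos t)^2 := by nlinarith [hr.1, sq_nonneg (1-r), sq_nonneg (Real.cos t)]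
      have b2 : (1-r)^2 + 4*r*(Real.cos t)^2 ≤ 4 := by nlinarith [hr.1, hr.2, mul_self_nonneg (1-r), mul_nonneg hc.le (sub_nonneg.2 hc1)]
      have l1 := Real.log_le_log (by positivity) b1
      have l2 := Real.log_le_log (lt_of_lt_of_le (by positivity) b1) b2
      rw [Real.log_pow] at l1
      push_cast at l1
      have l4 : 0 ≤ Real.log 4 := Real.log_nonneg (by norm_num)
      rw [norm_mul, Real.norm_of_nonneg ht.1.le]
      gcongr
      · exact ht.2
      · rw [norm_neg, Real.norm_eq_abs, abs_le]
        have := neg_abs_le (Real.log (Real.cos t))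
        have := abs_nonneg (Real.log (Real.cos t))
        constructor <;> linarith
    · exact (hlc.abs.add (by simp)).const_mul _
    · have : ∀ᵐ t : ℝ, t ≠ π/2 := by simp [MeasureTheory.ae_iff]
      filter_upwards [this] with t hne ht
      rw [Set.uIoc_of_le (by positivity)] at ht
      have hc : 0 < Real.cos t := Real.cos_pos_of_mem_Ioo ⟨by linarith [ht.1, Real.pi_pos], lt_of_le_of_ne ht.2 hne⟩
      have e : Real.log 2 + Real.log (Real.cos t) = Real.log ((1-1)^2 + 4*1*(Real.cos t)^2) / 2 := by
        rw [← Real.log_mul (by norm_num) hc.ne',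
          show ((1:ℝ)-1)^2 + 4*1*(Real.cos t)^2 = (2 * Real.cos t)^2 by ring, Real.log_pow]
        push_cast; ring
      rw [e]
      have : ContinuousAt (fun r : ℝ => t * (-(Real.log ((1-r)^2 + 4*r*(Real.cos t)^2) / 2))) 1 := by
        have : ContinuousAt (fun r : ℝ => Real.log ((1-r)^2 + 4*r*(Real.cos t)^2)) 1 := by
          apply ContinuousAt.log (by fun_prop)
          simp [hc.ne']
        fun_prop
      exact this.tendsto.mono_left nhdsWithin_le_nhds
  have L2 : Tendsto (fun r : ℝ => ∑' n : ℕ, (-r)^n * (((-1)^n - 1) / (4*(n:ℝ)^3)))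
      (𝓝[<] 1) (𝓝 (∑' n : ℕ, (-1:ℝ)^n * (((-1)^n - 1) / (4*(n:ℝ)^3)))) := by
    apply tendsto_tsum_of_dominated_convergence (bound := fun n : ℕ => 1 / (n:ℝ)^3)
      (Real.summable_one_div_nat_pow.2 (by norm_num))
    · intro n
      have : Continuous (fun r : ℝ => (-r)^n * (((-1)^n - 1) / (4*(n:ℝ)^3))) := by fun_prop
      exact (this.tendsto 1).mono_left nhdsWithin_le_nhds
    · filter_upwards [hev] with r hr n
      have a1 : ‖(-r)^n‖ ≤ 1 := by
        rw [norm_pow, norm_neg, Real.norm_of_nonneg (by linarith [hr.1])]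
        exact pow_le_one₀ (by linarith [hr.1]) hr.2.le
      have a2 : ‖((-1:ℝ)^n - 1)‖ ≤ 4 := by
        rcases neg_one_pow_eq_or ℝ n with h | h <;> rw [h] <;> norm_num
      rw [norm_mul, norm_div, Real.norm_of_nonneg (by positivity : 0 ≤ 4*(n:ℝ)^3)]
      calc _ ≤ 1 * (4 / (4*(n:ℝ)^3)) := by gcongr
        _ = _ := by rw [one_mul, ← div_div]; norm_num
  have E := tendsto_nhds_unique (L1.congr' (by
    filter_upwards [hev] with r hr
    exact (aux_hasSum r (by linarith [hr.1]) hr.2).tsum_eq.symm)) L2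
  rw [aux_zeta] at E
  have hi : IntervalIntegrable (fun t => t * Real.log (Real.cos t)) MeasureTheory.volume 0 (π/2) :=
    hlc.continuousOn_mul (by fun_prop)
  have : (∫ t in (0:ℝ)..(π/2), t * (-(Real.log 2 + Real.log (Real.cos t))))
      = -(π^2/8) * Real.log 2 - ∫ t in (0:ℝ)..(π/2), t * Real.log (Real.cos t) := by
    have e : (fun t : ℝ => t * (-(Real.log 2 + Real.log (Real.cos t)))) =
      fun t => t * (-Real.log 2) - t * Real.log (Real.cos t) := by ext; ring
    rw [e, intervalIntegral.integral_sub (Continuous.intervalIntegrable (by fun_prop) _ _) hi,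
      intervalIntegral.integral_mul_const, integral_id]
    ring
  linarith
end

section
/- ∫_0^{π/2} ξ(t)² dt = π·(2ζ(3) − (π²+1)/6), where ξ(t) = 1 + 2t·tan t + (t² − π²/4)·sec²t on [0, π/2) and ξ(π/2) = 0. -/
open Real

open Filter Topology MeasureTheory

namespace Aux16

lemma sinc_pos {s : ℝ} (h0 : 0 ≤ s) (h1 : s ≤ π/2) : 0 < sinc s := by
  rcases h0.eq_or_lt with rfl | h
  · simp
  · rw [Real.sinc_of_ne_zero h.ne']
    exact div_pos (Real.sin_pos_of_pos_of_lt_pi h (by linarith [Real.pi_pos])) h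

/-- the smooth quotient `s (s-π)(2s-π)/sin s` -/
noncomputable def h (s : ℝ) : ℝ := (s - π) * (2 * s - π) / sinc s

lemma h_cont : ContinuousOn h (Set.Icc 0 (π/2)) := by
  unfold h
  apply ContinuousOn.div
  · fun_prop
  · exact Real.continuous_sinc.continuousOn
  · intro s hs
    exact (sinc_pos hs.1 hs.2).ne'

lemma h_mul_sin {s : ℝ} (h0 : 0 ≤ s) (h1 : s ≤ π/2) :
    h s * sin s = s * (s - π) * (2 * s - π) := by
  rcases h0.eq_or_lt with rfl | hh
  · simp
  · have hs : 0 < sin s := Real.sin_pos_of_pos_of_lt_pi hh (by linarith [Real.pi_pos])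
    unfold h
    rw [Real.sinc_of_ne_zero hh.ne']
    field_simp

lemma dirichlet (n : ℕ) (s : ℝ) :
    cos s = cos ((2*n+1)*s) + sin s * ∑ k ∈ Finset.range n, 2 * sin (2*((k:ℝ)+1)*s) := by
  induction n with
  | zero => simp
  | succ n ih =>
    rw [Finset.sum_range_succ, mul_add, ih]
    push_cast
    have e1 : (2*(n:ℝ)+1)*s = 2*((n:ℝ)+1)*s - s := by ring
    have e2 : (2*((n:ℝ)+1)+1)*s = 2*((n:ℝ)+1)*s + s := by ring
    rw [e1, e2, cos_sub, cos_add]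
    ring

lemma int_sin (k : ℕ) :
    ∫ s in (0:ℝ)..(π/2), s * (s - π) * (2 * s - π) * sin (2*((k:ℝ)+1)*s)
      = 3*π/4 * (1 / ((k:ℝ)+1)^3) := by
  obtain ⟨m, hm⟩ : ∃ m : ℝ, m = (k:ℝ)+1 := ⟨_, rfl⟩
  have hm0 : m ≠ 0 := by rw [hm]; positivity
  have hsin : sin (2*m*(π/2)) = 0 := by
    have := Real.sin_nat_mul_pi (k+1)
    rw [show 2*m*(π/2) = ((k+1:ℕ):ℝ)*π by rw [hm]; push_cast; ring]
    exact this
  rw [← hm]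
  have key : ∀ s ∈ Set.uIcc (0:ℝ) (π/2), HasDerivAt (fun s : ℝ =>
      -(s * (s - π) * (2 * s - π)) * (cos (2*m*s) / (2*m))
      + (6*s^2 - 6*π*s + π^2) * (sin (2*m*s) / (4*m^2))
      + (12 * s - 6*π) * (cos (2*m*s) / (8*m^3))
      - 12 * (sin (2*m*s) / (16*m^4)))
      (s * (s - π) * (2 * s - π) * sin (2*m*s)) s := by
    intro s _
    have hid := hasDerivAt_id' s
    have hl : HasDerivAt (fun s : ℝ => 2*m*s) (2*m) s := by
      simpa using hid.const_mul (2*m)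
    have hs := hl.sin
    have hc := hl.cos
    have hQ : HasDerivAt (fun s : ℝ => -(s * (s - π) * (2 * s - π)))
        (-(6*s^2 - 6*π*s + π^2)) s := by
      convert! ((hid.mul (hid.sub_const π)).mul ((hid.const_mul 2).sub_const π)).neg using 1
      simp only [Pi.mul_apply]
      ring
    have hQ1 : HasDerivAt (fun s : ℝ => (6*s^2 - 6*π*s + π^2)) (12*s - 6*π) s := by
      convert! ((((hid.pow 2).const_mul 6).sub (hid.const_mul (6*π))).add_const (π^2)) using 1
      norm_num
      ring
    have hQ2 : HasDerivAt (fun s : ℝ => 12*s - 6*π) 12 s := by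
      simpa using (hid.const_mul 12).sub_const (6*π)
    convert! (((hQ.mul (hc.div_const (2*m))).add (hQ1.mul (hs.div_const (4*m^2)))).add
      (hQ2.mul (hc.div_const (8*m^3)))).sub ((hs.div_const (16*m^4)).const_mul 12) using 1
    field_simp
    ring
  rw [intervalIntegral.integral_eq_sub_of_hasDerivAt key
    (by apply Continuous.intervalIntegrable; fun_prop)]
  simp only [hsin]
  simp
  field_simp
  ring

lemma RL : Tendsto (fun n : ℕ => ∫ s in (0:ℝ)..(π/2), h s * cos ((2*n+1)*s)) atTop (𝓝 0) := by
  have hpi := Real.pi_pos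
  let f : ℝ → ℂ := Set.indicator (Set.Ioc 0 (π/2)) (fun s => (h s : ℂ))
  have h1 := Real.tendsto_integral_exp_smul_cocompact f
  have h2 : Tendsto (fun n : ℕ => ((2*(n:ℝ)+1)/(2*π))) atTop (cocompact ℝ) := by
    refine Tendsto.mono_right ?_ atTop_le_cocompact
    apply Tendsto.atTop_div_const (by positivity)
    apply tendsto_atTop_add_const_right
    exact tendsto_natCast_atTop_atTop.const_mul_atTop (by norm_num)
  have h3 := (Complex.continuous_re.tendsto _).comp (h1.comp h2)
  simp only [Complex.zero_re] at h3
  refine h3.congr ?_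
  intro n
  have hint : IntegrableOn (fun s => (h s : ℂ)) (Set.Ioc 0 (π/2)) := by
    have : ContinuousOn (fun s => (h s : ℂ)) (Set.Icc 0 (π/2)) :=
      Complex.continuous_ofReal.comp_continuousOn h_cont
    exact (this.integrableOn_Icc).mono_set Set.Ioc_subset_Icc_self
  have hf : Integrable f := hint.integrable_indicator measurableSet_Ioc
  simp only [Function.comp]
  have hi : Integrable (fun v : ℝ =>
      Real.fourierChar (-(v * ((2*(n:ℝ)+1)/(2*π)))) • f v) := by
    have := (Real.fourierIntegral_convergent_iff (μ := volume) (f := f)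
      ((2*(n:ℝ)+1)/(2*π))).2 hf
    refine this.congr (ae_of_all _ fun v => ?_)
    simp [mul_comm]
  have e := integral_re hi
  simp only [RCLike.re_eq_complex_re] at e
  rw [← e, intervalIntegral.integral_of_le (by positivity), ← integral_indicator measurableSet_Ioc]
  congr 1
  ext v
  by_cases hv : v ∈ Set.Ioc 0 (π/2)
  · simp only [f, Set.indicator_of_mem hv]
    rw [Circle.smul_def, Real.fourierChar_apply, smul_eq_mul, Complex.re_mul_ofReal,
      Complex.exp_ofReal_mul_I_re, mul_comm]
    congr 1
    rw [← Real.cos_neg]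
    congr 1
    field_simp
  · simp [f, Set.indicator_of_notMem hv]

lemma int_h : ∫ s in (0:ℝ)..(π/2), h s * cos s = 3*π/2 * ∑' k : ℕ, 1 / ((k:ℝ)+1)^3 := by
  have hpi := Real.pi_pos
  have hsum : Summable (fun k : ℕ => 1 / ((k:ℝ)+1)^3) := by
    have := (summable_nat_add_iff 1).2 (Real.summable_one_div_nat_pow.2 (show 1 < 3 by norm_num))
    simpa using this
  have hT := (hsum.hasSum.tendsto_sum_nat.const_mul (3*π/2)).add RL
  rw [add_zero] at hT
  refine tendsto_nhds_unique ?_ hT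
  refine tendsto_const_nhds.congr fun n => ?_
  have hc : IntervalIntegrable (fun s => h s * cos ((2*n+1)*s)) volume 0 (π/2) := by
    apply ContinuousOn.intervalIntegrable
    rw [Set.uIcc_of_le (by positivity)]
    exact h_cont.mul (by fun_prop)
  have e : ∫ s in (0:ℝ)..(π/2), h s * cos s = ∫ s in (0:ℝ)..(π/2),
      ((∑ k ∈ Finset.range n, 2 * (s * (s - π) * (2 * s - π) * sin (2*((k:ℝ)+1)*s)))
        + h s * cos ((2*n+1)*s)) := by
    apply intervalIntegral.integral_congr
    intro s hs
    rw [Set.uIcc_of_le (by positivity)] at hs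
    simp only
    rw [dirichlet n s, mul_add, ← mul_assoc, h_mul_sin hs.1 hs.2, Finset.mul_sum, add_comm]
    congr 1
    apply Finset.sum_congr rfl
    intros
    ring
  rw [e, intervalIntegral.integral_add _ hc, intervalIntegral.integral_finsetSum]
  · congr 1
    rw [Finset.mul_sum]
    apply Finset.sum_congr rfl
    intro k _
    rw [intervalIntegral.integral_const_mul, int_sin]
    ring
  · intro k _
    apply Continuous.intervalIntegrable; fun_prop
  · apply Continuous.intervalIntegrable; fun_prop

lemma lim_u : Tendsto (fun s => s * (cos s / sin s)) (𝓝[>] 0) (𝓝 1) := by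
  have : Tendsto (fun s => cos s / sinc s) (𝓝 0) (𝓝 (cos 0 / sinc 0)) :=
    (Real.continuous_cos.tendsto 0).div (Real.continuous_sinc.tendsto 0) (by simp)
  simp only [cos_zero, sinc_zero, div_one] at this
  refine (this.mono_left nhdsWithin_le_nhds).congr' ?_
  filter_upwards [self_mem_nhdsWithin] with s hs
  have hs : 0 < s := hs
  rw [Real.sinc_of_ne_zero hs.ne']
  simp only [div_div_eq_mul_div]
  ring

lemma lim_v : Tendsto (fun s => (s * (cos s / sin s) - 1)/s) (𝓝[>] 0) (𝓝 0) := by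
  have : Tendsto (fun s => s / sinc s) (𝓝 0) (𝓝 (0 / sinc 0)) :=
    tendsto_id.div (Real.continuous_sinc.tendsto 0) (by simp)
  rw [zero_div] at this
  refine squeeze_zero_norm' ?_ (this.mono_left nhdsWithin_le_nhds)
  have hpi := Real.pi_pos
  filter_upwards [Ioo_mem_nhdsGT (show (0:ℝ) < π/2 by positivity)] with s hs
  have hs0 := hs.1
  have hsin : 0 < sin s := Real.sin_pos_of_pos_of_lt_pi hs0 (by linarith [hs.2])
  rw [Real.sinc_of_ne_zero hs0.ne']
  have h1 : sin s < s := Real.sin_lt hs0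
  have h2 : 1 - s^2/2 ≤ cos s := Real.one_sub_sq_div_two_le_cos
  have hcos : 0 < cos s := Real.cos_pos_of_mem_Ioo ⟨by linarith, hs.2⟩
  have h3 : s * cos s ≤ sin s := by
    have := Real.le_tan hs0.le hs.2
    rwa [Real.tan_eq_sin_div_cos, le_div_iff₀ hcos] at this
  have e : (s * (cos s / sin s) - 1)/s = -((sin s - s * cos s)/(s * sin s)) := by
    field_simp
    ring
  rw [e, norm_neg, Real.norm_eq_abs, abs_of_nonneg (div_nonneg (by linarith) (by positivity)),
    div_le_iff₀ (by positivity)]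
  have : s / (sin s / s) * (s * sin s) = s^3 := by field_simp
  rw [this]
  nlinarith [mul_le_mul_of_nonneg_left h2 hs0.le, pow_pos hs0 3]

/-- elementary part of the antiderivative -/
noncomputable def F (s : ℝ) : ℝ :=
  -(s^2 - π*s)^2/3 * (cos s / sin s)^3 + 2*(s^2-π*s)*(2*s-π)/3 * (cos s / sin s)^2
   - ((2*s-π)^2/3 + 2*(s^2-π*s)/3 + (s^2-π*s)^2) * (cos s / sin s)

lemma lim_F : Tendsto F (𝓝[>] 0) (𝓝 (2*π/3)) := by
  have hid : Tendsto (fun s : ℝ => s) (𝓝[>] 0) (𝓝 0) := tendsto_id.mono_left nhdsWithin_le_nhds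
  have hq : Tendsto (fun s : ℝ => s - π) (𝓝[>] 0) (𝓝 (0 - π)) := hid.sub_const π
  have hu := lim_u
  have hv := lim_v
  have := ((((((hq.pow 2).div_const 3).mul hv).mul (hu.sub_const 1)).mul hu).neg.add
    (((hq.const_mul 2).div_const 3).mul ((hu.sub_const 1).mul hu))).sub
    (((hid.div_const 3).mul hu).add ((((hq.const_mul 2).div_const 3).mul hu).add
      ((hid.mul (hq.pow 2)).mul hu)))
  convert! this.congr' ?_ using 1
  · congr 1; ring
  · filter_upwards [self_mem_nhdsWithin] with s hs
    have hs : 0 < s := hs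
    unfold F
    generalize cos s / sin s = c
    field_simp
    ring

noncomputable def X (s : ℝ) : ℝ :=
  1 - (2*s-π) * (cos s / sin s) + (s^2 - π*s) * (1/sin s)^2

lemma F_deriv {s : ℝ} (h0 : 0 < s) (h1 : s ≤ π/2) :
    HasDerivAt F (X s ^ 2 - (1 - π^2/3) - 4/3 * (h s * cos s)) s := by
  have hpi := Real.pi_pos
  have hsin : 0 < sin s := Real.sin_pos_of_pos_of_lt_pi h0 (by linarith)
  have hid := hasDerivAt_id' s
  have hc : HasDerivAt (fun s => cos s / sin s) (-(1 + (cos s / sin s)^2)) s := by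
    convert! (Real.hasDerivAt_cos s).div (Real.hasDerivAt_sin s) hsin.ne' using 1
    field_simp
    ring
  have hp : HasDerivAt (fun s : ℝ => s^2 - π*s) (2*s-π) s := by
    convert! (hid.pow 2).sub (hid.const_mul π) using 1
    simp
  have hp' : HasDerivAt (fun s : ℝ => 2*s - π) 2 s := by
    simpa using (hid.const_mul 2).sub_const π
  have e1 : h s * cos s = s * (s - π) * (2 * s - π) * (cos s / sin s) := by
    rw [← h_mul_sin h0.le h1]; field_simp
  have e2 : (1 / sin s)^2 = 1 + (cos s / sin s)^2 := by
    field_simp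
    rw [Real.sin_sq_add_cos_sq]
  have := (((hp.pow 2).neg.div_const 3).mul (hc.pow 3)).add
    ((((hp.const_mul 2).mul hp').div_const 3).mul (hc.pow 2)) |>.sub
    (((((hp'.pow 2).div_const 3).add ((hp.const_mul 2).div_const 3)).add (hp.pow 2)).mul hc)
  convert! this using 1
  unfold X
  rw [e1, e2]
  simp only [Pi.pow_apply, Pi.neg_apply, Pi.mul_apply, Pi.add_apply]
  generalize cos s / sin s = c
  norm_num
  ring

lemma int_X : ∫ s in (0:ℝ)..(π/2), X s ^ 2 =
    (1 - π^2/3) * (π/2) + 4/3 * (∫ s in (0:ℝ)..(π/2), h s * cos s) - 2*π/3 := by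
  have hpi := Real.pi_pos
  have hle : (0:ℝ) ≤ π/2 := by positivity
  have hFb : F (π/2) = 0 := by simp [F]
  have hcont : ContinuousOn (fun s => h s * cos s) (Set.uIcc 0 (π/2)) := by
    rw [Set.uIcc_of_le hle]; exact h_cont.mul (by fun_prop)
  have hci : IntervalIntegrable (fun s => h s * cos s) volume 0 (π/2) := hcont.intervalIntegrable
  let P : ℝ → ℝ := fun s => ∫ x in (0:ℝ)..s, h x * cos x
  have hPc : ContinuousOn P (Set.Icc 0 (π/2)) := by
    have := intervalIntegral.continuousOn_primitive_interval (μ := volume)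
      (f := fun s => h s * cos s) (a := 0) (b := π/2) hcont.integrableOn_uIcc
    rwa [Set.uIcc_of_le hle] at this
  have hPd : ∀ s ∈ Set.Ioo 0 (π/2), HasDerivAt P (h s * cos s) s := by
    intro s hs
    have hnb : Set.Icc 0 (π/2) ∈ 𝓝 s := Icc_mem_nhds hs.1 hs.2
    rw [Set.uIcc_of_le hle] at hcont
    apply intervalIntegral.integral_hasDerivAt_right
    · apply hci.mono_set
      rw [Set.uIcc_of_le hle, Set.uIcc_of_le hs.1.le]
      exact Set.Icc_subset_Icc le_rfl hs.2.le
    · exact hcont.stronglyMeasurableAtFilter_nhdsWithin measurableSet_Icc s |>.filter_mono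
        (by rw [nhdsWithin_eq_nhds.2 hnb])
    · exact hcont.continuousAt hnb
  let G : ℝ → ℝ := fun s => Function.update F 0 (2*π/3) s + ((1 - π^2/3) * s + 4/3 * P s)
  have hGc : ContinuousOn G (Set.Icc 0 (π/2)) := by
    apply ContinuousOn.add
    · intro s hs
      rcases hs.1.eq_or_lt with rfl | h0
      · rw [continuousWithinAt_update_same]
        refine lim_F.mono_left (nhdsWithin_mono _ ?_)
        rintro x ⟨hx, hx'⟩
        exact lt_of_le_of_ne hx.1 (Ne.symm hx')
      · apply ContinuousAt.continuousWithinAt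
        rw [continuousAt_update_of_ne h0.ne']
        exact (F_deriv h0 hs.2).continuousAt
    · exact (by fun_prop : ContinuousOn (fun s : ℝ => (1 - π^2/3) * s) _).add
        (continuousOn_const.mul hPc)
  have hGd : ∀ s ∈ Set.Ioo 0 (π/2), HasDerivAt G (X s ^ 2) s := by
    intro s hs
    have hF : HasDerivAt (Function.update F 0 (2*π/3))
        (X s ^ 2 - (1 - π^2/3) - 4/3 * (h s * cos s)) s := by
      apply (F_deriv hs.1 hs.2.le).congr_of_eventuallyEq
      filter_upwards [isOpen_ne.mem_nhds hs.1.ne'] with x hx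
      exact Function.update_of_ne hx _ _
    convert! hF.add (((hasDerivAt_id' s).const_mul (1 - π^2/3)).add
      ((hPd s hs).const_mul (4/3))) using 1
    ring
  have hint : IntervalIntegrable (fun s => X s ^ 2) volume 0 (π/2) := by
    rw [intervalIntegrable_iff_integrableOn_Ioc_of_le hle]
    exact intervalIntegral.integrableOn_deriv_of_nonneg hGc hGd (fun s _ => sq_nonneg _)
  rw [intervalIntegral.integral_eq_sub_of_hasDerivAt_of_le hle hGc hGd hint]
  simp only [G, P, Function.update_self, Function.update_of_ne (by positivity : π/2 ≠ 0), hFb,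
    intervalIntegral.integral_same]
  ring

end Aux16

theorem stmt16 (ξ : ℝ → ℝ)
    (hξ : ∀ t, t < π/2 →
      ξ t = 1 + 2 * t * Real.tan t + (t^2 - π^2/4) * (1 / Real.cos t)^2)
    (hξ' : ξ (π/2) = 0) :
    (∫ t in (0:ℝ)..(π/2), ξ t ^ 2) =
      π * (2 * (∑' k : ℕ, 1 / ((k:ℝ)+1)^3) - (π^2 + 1) / 6) := by
  have hpi := Real.pi_pos
  have e : ∫ t in (0:ℝ)..(π/2), ξ t ^ 2 = ∫ s in (0:ℝ)..(π/2), Aux16.X s ^ 2 := by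
    have h1 := intervalIntegral.integral_comp_sub_left (a := 0) (b := π/2)
      (fun t => ξ t ^ 2) (π/2)
    simp only [sub_self, sub_zero] at h1
    rw [← h1]
    rw [intervalIntegral.integral_of_le (by positivity),
      intervalIntegral.integral_of_le (by positivity)]
    apply setIntegral_congr_fun measurableSet_Ioc
    intro s hs
    simp only
    congr 1
    rw [hξ _ (by linarith [hs.1]), Real.tan_eq_sin_div_cos, Real.sin_pi_div_two_sub,
      Real.cos_pi_div_two_sub]
    unfold Aux16.X
    ring
  rw [e, Aux16.int_X, Aux16.int_h]
  ring
end
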